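/- arXiv:0812.1624 — 10 statements merged into one kernel-verified Lean document; each statement's English description precedes it below -/
import Mathlib

section
/- Let A be an n×n complex matrix and set A₁ = (A + A*)/2, A₂ = (A − A*)/(2i), which are Hermitian. Let C = {y ∈ ℝ³ : y₀·I + y₁·A₁ + y₂·A₂ is positive semidefinite}. Then the dual cone of C, namely {x ∈ ℝ³ : x₀y₀ + x₁y₁ + x₂y₂ ≥ 0 for all y ∈ C}, equals the set {(Re trace(W), Re trace(A₁W), Re trace(A₂W)) : W ∈ ℂ^{n×n}, W positive semidefinite}. In particular the dual of the LMI set C is an affine projection of the cone of positive semidefinite matrices. -/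
/-!
Write `K` for the set of triples `(Re tr W, Re tr (A₁W), Re tr (A₂W))` with `W ⪰ 0`. Pairing such a
triple with `y` gives `Re tr (M W)`, where `M = y₀ I + y₁ A₁ + y₂ A₂` (`pairing_eq`). Hence `K` lies
in the dual cone, because `tr (M W) ≥ 0` when `M` and `W` are both positive semidefinite
(`trace_mul_re_nonneg`).

Conversely, `K` is a closed convex cone, so a point outside it is strictly separated from it by
some `y`; testing nonnegativity of `Re tr (M W)` on the rank-one matrices `W = v v*` shows `M ⪰ 0`,
so the point is not in the dual cone. Closedness (`isClosed_momentSet`) is the essential point: it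
holds because the first coordinate is the trace, which bounds `W`. In terms of a factor `B` with
`W = B* B`, the trace is the sum of the squared moduli of the entries of `B`, so each part of `K`
with bounded first coordinate is a continuous image of a compact set.
-/

open Matrix
open scoped ComplexOrder

/-- The real-linear map `W ↦ (Re tr W, Re tr (A₁W), Re tr (A₂W))`. -/
def traceMap {n : ℕ} (A₁ A₂ : Matrix (Fin n) (Fin n) ℂ) :
    Matrix (Fin n) (Fin n) ℂ →ₗ[ℝ] ℝ × ℝ × ℝ where
  toFun W := (W.trace.re, ((A₁ * W).trace).re, ((A₂ * W).trace).re)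
  map_add' V W := by simp [mul_add, trace_add]
  map_smul' c W := by simp [trace_smul]

/-- The image of the cone of positive semidefinite matrices under `traceMap`. -/
def momentSet {n : ℕ} (A₁ A₂ : Matrix (Fin n) (Fin n) ℂ) : Set (ℝ × ℝ × ℝ) :=
  traceMap A₁ A₂ '' {W | W.PosSemidef}

lemma pairing_eq {n : ℕ} (A₁ A₂ W : Matrix (Fin n) (Fin n) ℂ) (y : ℝ × ℝ × ℝ) :
    (traceMap A₁ A₂ W).1 * y.1 + (traceMap A₁ A₂ W).2.1 * y.2.1
        + (traceMap A₁ A₂ W).2.2 * y.2.2 =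
      ((((y.1 : ℂ) • (1 : Matrix (Fin n) (Fin n) ℂ) + (y.2.1 : ℂ) • A₁
          + (y.2.2 : ℂ) • A₂) * W).trace).re := by
  simp [traceMap, add_mul, trace_add, trace_smul]
  ring

lemma exists_eq_conjTranspose_mul_self {n : ℕ} {W : Matrix (Fin n) (Fin n) ℂ}
    (hW : W.PosSemidef) : ∃ B : Matrix (Fin n) (Fin n) ℂ, W = Bᴴ * B := by
  open scoped MatrixOrder Matrix.Norms.L2Operator in
  exact CStarAlgebra.nonneg_iff_eq_star_mul_self.mp hW.nonneg

lemma trace_mul_re_nonneg {n : ℕ} {M W : Matrix (Fin n) (Fin n) ℂ}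
    (hM : M.PosSemidef) (hW : W.PosSemidef) : 0 ≤ ((M * W).trace).re := by
  obtain ⟨B, rfl⟩ := exists_eq_conjTranspose_mul_self hW
  rw [← mul_assoc, trace_mul_comm, ← mul_assoc]
  exact (Complex.le_def.mp (hM.mul_mul_conjTranspose_same B).trace_nonneg).1

/-- Testing against rank-one matrices `v v*` detects positive semidefiniteness. -/
lemma posSemidef_of_trace_mul {n : ℕ} {M : Matrix (Fin n) (Fin n) ℂ} (hM : M.IsHermitian)
    (h : ∀ W : Matrix (Fin n) (Fin n) ℂ, W.PosSemidef → 0 ≤ ((M * W).trace).re) :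
    M.PosSemidef := by
  refine PosSemidef.of_dotProduct_mulVec_nonneg hM fun v => ?_
  have h1 := h _ (posSemidef_vecMulVec_self_star v)
  rw [mul_vecMulVec, trace_vecMulVec, dotProduct_comm] at h1
  exact Complex.le_def.mpr ⟨h1, (hM.im_star_dotProduct_mulVec_self v).symm⟩

lemma trace_conjTranspose_mul_self_re {n : ℕ} (B : Matrix (Fin n) (Fin n) ℂ) :
    ((Bᴴ * B).trace).re = ∑ i, ∑ j, ‖B j i‖ ^ 2 := by
  simp [trace, mul_apply, ← Complex.normSq_eq_norm_sq, Complex.normSq_apply]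

lemma isClosed_momentSet {n : ℕ} (A₁ A₂ : Matrix (Fin n) (Fin n) ℂ) :
    IsClosed (momentSet A₁ A₂) := by
  have hcont : Continuous fun B : Matrix (Fin n) (Fin n) ℂ => traceMap A₁ A₂ (Bᴴ * B) := by
    simp only [traceMap, LinearMap.coe_mk, AddHom.coe_mk]
    fun_prop
  have hcomp : ∀ t : ℝ, IsCompact ({x : ℝ × ℝ × ℝ | x.1 ≤ t} ∩ momentSet A₁ A₂) := by
    intro t
    have hbox : IsCompact {B : Matrix (Fin n) (Fin n) ℂ |
        ((Bᴴ * B).trace).re ≤ t} := by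
      have hbig : IsCompact (Set.pi Set.univ fun _ : Fin n =>
          Set.pi Set.univ fun _ : Fin n => Metric.closedBall (0 : ℂ) (Real.sqrt t)) :=
        isCompact_univ_pi fun _ => isCompact_univ_pi fun _ => isCompact_closedBall _ _
      refine hbig.of_isClosed_subset
        (isClosed_le (continuous_fst.comp hcont) continuous_const) ?_
      intro (B : Matrix (Fin n) (Fin n) ℂ) (hB : ((Bᴴ * B).trace).re ≤ t) i _ j _
      rw [trace_conjTranspose_mul_self_re] at hB
      refine mem_closedBall_zero_iff.mpr ?_
      apply Real.le_sqrt_of_sq_le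
      calc ‖B i j‖ ^ 2 ≤ ∑ k, ‖B k j‖ ^ 2 :=
            Finset.single_le_sum (f := fun k => ‖B k j‖ ^ 2)
              (fun _ _ => by positivity) (Finset.mem_univ i)
        _ ≤ ∑ l, ∑ k, ‖B k l‖ ^ 2 :=
            Finset.single_le_sum (f := fun l => ∑ k, ‖B k l‖ ^ 2)
              (fun _ _ => by positivity) (Finset.mem_univ j)
        _ ≤ t := hB
    convert hbox.image hcont using 1
    ext x
    constructor
    · rintro ⟨hx, W, hW, rfl⟩
      obtain ⟨B, rfl⟩ := exists_eq_conjTranspose_mul_self hW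
      exact ⟨B, hx, rfl⟩
    · rintro ⟨B, hB, rfl⟩
      exact ⟨hB, _, posSemidef_conjTranspose_mul_self B, rfl⟩
  refine isClosed_of_closure_subset fun x hx => ?_
  -- Near `x` the first coordinate is below `x.1 + 1`, so only a compact part of the set matters.
  have hopen : IsOpen {z : ℝ × ℝ × ℝ | z.1 < x.1 + 1} :=
    isOpen_lt continuous_fst continuous_const
  have h1 := hopen.inter_closure ⟨show x.1 < x.1 + 1 by linarith, hx⟩
  have h2 : x ∈ closure ({z : ℝ × ℝ × ℝ | z.1 ≤ x.1 + 1} ∩ momentSet A₁ A₂) :=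
    closure_mono (Set.inter_subset_inter_left _ (Set.ofPred_subset_ofPred.mpr
      fun _ hz => le_of_lt hz)) h1
  rw [(hcomp _).isClosed.closure_eq] at h2
  exact h2.2

lemma convex_momentSet {n : ℕ} (A₁ A₂ : Matrix (Fin n) (Fin n) ℂ) :
    Convex ℝ (momentSet A₁ A₂) := by
  refine Convex.linear_image ?_ _
  intro V hV W hW a b ha hb _
  exact (hV.smul ha).add (hW.smul hb)

/-- The hard inclusion, for arbitrary Hermitian `A₁`, `A₂`: a functional separating `x` from
`momentSet A₁ A₂` has, up to sign, coefficients `y` for which the pencil is positive semidefinite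
and the pairing with `x` is negative. -/
lemma mem_momentSet_of_dual {n : ℕ} {A₁ A₂ : Matrix (Fin n) (Fin n) ℂ}
    (hA₁ : A₁.IsHermitian) (hA₂ : A₂.IsHermitian) {x : ℝ × ℝ × ℝ}
    (hx : ∀ y : ℝ × ℝ × ℝ,
        ((y.1 : ℂ) • (1 : Matrix (Fin n) (Fin n) ℂ) + (y.2.1 : ℂ) • A₁
          + (y.2.2 : ℂ) • A₂).PosSemidef →
        0 ≤ x.1 * y.1 + x.2.1 * y.2.1 + x.2.2 * y.2.2) :
    x ∈ momentSet A₁ A₂ := by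
  by_contra hxK
  obtain ⟨f, u, hfK, hfx⟩ := geometric_hahn_banach_closed_point (convex_momentSet A₁ A₂)
    (isClosed_momentSet A₁ A₂) hxK
  have hu : 0 < u := by
    simpa using hfK _ ⟨0, PosSemidef.zero, rfl⟩
  -- A linear functional bounded above on a cone is nonpositive there.
  have hcone : ∀ W : Matrix (Fin n) (Fin n) ℂ, W.PosSemidef → f (traceMap A₁ A₂ W) ≤ 0 := by
    intro W hW
    by_contra! hpos
    have h1 := hfK _ ⟨_, hW.smul (div_pos hu hpos).le, rfl⟩
    rw [map_smul, map_smul, smul_eq_mul, div_mul_cancel₀ _ hpos.ne'] at h1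
    exact h1.false
  have hcoord : ∀ z : ℝ × ℝ × ℝ,
      f z = z.1 * f (1, 0, 0) + z.2.1 * f (0, 1, 0) + z.2.2 * f (0, 0, 1) := by
    intro z
    simp only [← smul_eq_mul, ← map_smul, ← map_add]
    simp
  have hM := hx (-f (1, 0, 0), -f (0, 1, 0), -f (0, 0, 1)) <| by
    refine posSemidef_of_trace_mul ?_ fun W hW => ?_
    · have hs : ∀ r : ℝ, IsSelfAdjoint (r : ℂ) := fun r => Complex.conj_ofReal r
      exact ((isHermitian_one.smul (hs _)).add (hA₁.smul (hs _))).add (hA₂.smul (hs _))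
    · rw [← pairing_eq]
      have := hcone W hW
      rw [hcoord] at this
      linarith
  rw [hcoord] at hfx
  linarith

/-- The dual cone of the two-dimensional LMI set
`C = {y ∈ ℝ³ : y₀·I + y₁·A₁ + y₂·A₂ ⪰ 0}` equals the affine projection
`{(Re tr W, Re tr(A₁W), Re tr(A₂W)) : W ⪰ 0}` of the semidefinite cone. -/
theorem numerical_range_dual_cone {n : ℕ} (A A₁ A₂ : Matrix (Fin n) (Fin n) ℂ)
    (hA₁ : A₁ = (2 : ℂ)⁻¹ • (A + Aᴴ))
    (hA₂ : A₂ = (2 * Complex.I)⁻¹ • (A - Aᴴ)) :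
    {x : ℝ × ℝ × ℝ | ∀ y : ℝ × ℝ × ℝ,
        ((y.1 : ℂ) • (1 : Matrix (Fin n) (Fin n) ℂ) + (y.2.1 : ℂ) • A₁
          + (y.2.2 : ℂ) • A₂).PosSemidef →
        0 ≤ x.1 * y.1 + x.2.1 * y.2.1 + x.2.2 * y.2.2} =
    {x : ℝ × ℝ × ℝ | ∃ W : Matrix (Fin n) (Fin n) ℂ, W.PosSemidef ∧
        x = (W.trace.re, ((A₁ * W).trace).re, ((A₂ * W).trace).re)} := by
  have h₁ : A₁.IsHermitian := by
    rw [hA₁, IsHermitian, conjTranspose_smul, conjTranspose_add, conjTranspose_conjTranspose,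
      add_comm]
    simp
  have h₂ : A₂.IsHermitian := by
    rw [hA₂, IsHermitian, conjTranspose_smul, conjTranspose_sub, conjTranspose_conjTranspose,
      ← neg_sub A, smul_neg, ← neg_smul]
    simp
  ext x
  constructor
  · intro hx
    obtain ⟨W, hW, rfl⟩ := mem_momentSet_of_dual h₁ h₂ hx
    exact ⟨W, hW, rfl⟩
  · rintro ⟨W, hW, rfl⟩ y hy
    exact (trace_mul_re_nonneg hy hW).trans_eq (pairing_eq A₁ A₂ W y).symm
end

section
/- Let A be an n×n complex matrix with n ≥ 1, and set A₁ = (A + A*)/2, A₂ = (A − A*)/(2i). Then the set {(Re trace(A₁W), Re trace(A₂W)) ∈ ℝ² : W ∈ ℂ^{n×n} positive semidefinite with trace(W) = 1} equals the convex hull of the set {(w*A₁w, w*A₂w) ∈ ℝ² : w ∈ ℂⁿ, w*w = 1}. Equivalently, the convex hull of the numerical range of A, viewed in ℝ², is the image of the set of density matrices under W ↦ (Re trace(A₁W), Re trace(A₂W)). -/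
/-!
Both inclusions hold for arbitrary matrices `A₁`, `A₂`. The map `W ↦ (Re tr(A₁W), Re tr(A₂W))` is
real-linear and density matrices form a convex set, so its image is convex; the rank-one density
matrices `w w*` with `w*w = 1` give exactly the points of the numerical range, whence the convex
hull is contained in the image. Conversely, the spectral theorem writes a density matrix as
`W = ∑ⱼ λⱼ uⱼuⱼ*` with `λⱼ ≥ 0`, `∑ⱼ λⱼ = 1` and `uⱼ` orthonormal, so that
`tr(BW) = ∑ⱼ λⱼ uⱼ*Buⱼ` for every `B` (`trace_mul_eq_sum_eigenvalues`), a convex combination of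
points of the numerical range.
-/

open Matrix
open scoped ComplexOrder

/-- The rank-one projection `w w*` represents the quadratic form `w ↦ w*Bw`. -/
lemma trace_mul_vecMulVec_star {n : ℕ} (B : Matrix (Fin n) (Fin n) ℂ) (w : Fin n → ℂ) :
    (B * vecMulVec w (star w)).trace = star w ⬝ᵥ B.mulVec w := by
  rw [mul_vecMulVec, trace_vecMulVec, dotProduct_comm]

lemma trace_mul_eq_sum_eigenvalues {n : ℕ} (B : Matrix (Fin n) (Fin n) ℂ)
    {W : Matrix (Fin n) (Fin n) ℂ} (hW : W.IsHermitian) :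
    (B * W).trace = ∑ j, (hW.eigenvalues j : ℂ) *
      (star (hW.eigenvectorBasis j : Fin n → ℂ) ⬝ᵥ
        B.mulVec (hW.eigenvectorBasis j : Fin n → ℂ)) := by
  set U : Matrix (Fin n) (Fin n) ℂ := (hW.eigenvectorUnitary : Matrix (Fin n) (Fin n) ℂ) with hU
  have hs : W = U * diagonal (fun j => (hW.eigenvalues j : ℂ)) * star U := by
    conv_lhs => rw [hW.spectral_theorem, Unitary.conjStarAlgAut_apply]
    rfl
  have ht : (B * W).trace
      = (star U * (B * U) * diagonal (fun j => (hW.eigenvalues j : ℂ))).trace := by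
    conv_lhs => rw [hs]
    rw [← Matrix.mul_assoc, trace_mul_comm, ← Matrix.mul_assoc B, ← Matrix.mul_assoc]
  rw [ht, trace]
  refine Finset.sum_congr rfl fun j _ => ?_
  rw [diag_apply, mul_diagonal, mul_comm]
  rfl

/-- The convex hull of the numerical range of `A`, viewed in `ℝ²`, is the image of
the set of density matrices under `W ↦ (Re tr(A₁W), Re tr(A₂W))`. -/
theorem numerical_range_density_matrices {n : ℕ} (hn : 1 ≤ n)
    (A A₁ A₂ : Matrix (Fin n) (Fin n) ℂ)
    (hA₁ : A₁ = (2 : ℂ)⁻¹ • (A + Aᴴ))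
    (hA₂ : A₂ = (2 * Complex.I)⁻¹ • (A - Aᴴ)) :
    {x : ℝ × ℝ | ∃ W : Matrix (Fin n) (Fin n) ℂ, W.PosSemidef ∧ W.trace = 1 ∧
        x = (((A₁ * W).trace).re, ((A₂ * W).trace).re)} =
    convexHull ℝ {x : ℝ × ℝ | ∃ w : Fin n → ℂ, star w ⬝ᵥ w = 1 ∧
        x = ((star w ⬝ᵥ A₁.mulVec w).re, (star w ⬝ᵥ A₂.mulVec w).re)} := by
  apply Set.Subset.antisymm
  · rintro x ⟨W, hW, htr, rfl⟩
    have hH := hW.isHermitian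
    have hsum : ∑ j, hH.eigenvalues j = 1 := by
      have h := hH.trace_eq_sum_eigenvalues
      rw [htr] at h
      apply Complex.ofReal_injective
      rw [Complex.ofReal_sum, Complex.ofReal_one]
      exact h.symm
    have hre : ∀ B : Matrix (Fin n) (Fin n) ℂ, ((B * W).trace).re = ∑ j, hH.eigenvalues j *
        (star (hH.eigenvectorBasis j : Fin n → ℂ) ⬝ᵥ
          B.mulVec (hH.eigenvectorBasis j : Fin n → ℂ)).re := fun B => by
      rw [trace_mul_eq_sum_eigenvalues B hH, Complex.re_sum]
      exact Finset.sum_congr rfl fun j _ => Complex.re_ofReal_mul _ _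
    have hunit : ∀ j, star (hH.eigenvectorBasis j : Fin n → ℂ) ⬝ᵥ
        (hH.eigenvectorBasis j : Fin n → ℂ) = 1 := fun j => by
      have h := hH.eigenvectorBasis.orthonormal.1 j
      rw [dotProduct_comm, ← EuclideanSpace.inner_eq_star_dotProduct,
        inner_self_eq_norm_sq_to_K, h]
      simp
    have hcomb := (convex_convexHull ℝ {x : ℝ × ℝ | ∃ w : Fin n → ℂ, star w ⬝ᵥ w = 1 ∧
        x = ((star w ⬝ᵥ A₁.mulVec w).re, (star w ⬝ᵥ A₂.mulVec w).re)}).sum_mem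
      (t := Finset.univ) (fun j _ => hW.eigenvalues_nonneg j) hsum
      (fun j _ => subset_convexHull ℝ _ ⟨_, hunit j, rfl⟩)
    convert hcomb using 1
    ext
    · simp [Prod.fst_sum, hre]
    · simp [Prod.snd_sum, hre]
  · refine convexHull_min ?_ ?_
    · rintro x ⟨w, hw, rfl⟩
      refine ⟨vecMulVec w (star w), posSemidef_vecMulVec_self_star w, ?_, ?_⟩
      · rw [trace_vecMulVec, dotProduct_comm, hw]
      · rw [trace_mul_vecMulVec_star, trace_mul_vecMulVec_star]
    · rintro _ ⟨V, hV, hVt, rfl⟩ _ ⟨W, hW, hWt, rfl⟩ a b ha hb hab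
      have hab' : (a : ℂ) + b = 1 := by exact_mod_cast hab
      refine ⟨(a : ℂ) • V + (b : ℂ) • W, (hV.smul ?_).add (hW.smul ?_), ?_, ?_⟩
      · exact_mod_cast ha
      · exact_mod_cast hb
      · simp [hVt, hWt, hab']
      · ext <;> simp [Matrix.mul_add]
end

section
/- Let A be an n×n complex matrix with n ≥ 1, and set A₁ = (A + A*)/2, A₂ = (A − A*)/(2i). Then a point x = (x₁, x₂) ∈ ℝ² belongs to the numerical range W(A) = {(w*A₁w, w*A₂w) : w ∈ ℂⁿ, w*w = 1} if and only if for every (y₀, y₁, y₂) ∈ ℝ³ such that y₀·I + y₁·A₁ + y₂·A₂ is positive semidefinite, one has y₀ + y₁x₁ + y₂x₂ ≥ 0. That is, the numerical range equals the affine dual of the two-dimensional LMI set defined by the pencil (I, A₁, A₂). -/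
/-!
If `w` is a unit vector, evaluating a positive semidefinite `y₀ I + y₁ A₁ + y₂ A₂` at `w` gives the
inequality for the point of the numerical range that `w` defines.

Conversely, the numerical range, viewed inside `ℂ` as the image of the unit sphere under
`w ↦ w* A w`, is compact (the sphere is compact and the map is continuous) and convex
(Toeplitz–Hausdorff, `convex_numRange`). A point outside it is therefore strictly separated from it
by a real linear functional, and by homogeneity the coefficients of that functional form a positive
semidefinite member of the pencil which violates the inequality at the point.

Convexity reduces, by an affine change of `A`, to hitting every `t ∈ [0, 1]` when the values at `u`
and `v` are `0` and `1` (`exists_form_eq_of_zero_one`). After multiplying `v` by a phase that makes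
the cross terms real, the form is real on the segment from `u` to `v`, and the intermediate value
theorem gives the desired vector.
-/

open Matrix
open scoped ComplexOrder

/-- The numerical range of `A` as a subset of `ℂ`: the values `w* A w` on the unit sphere. -/
def numRange {n : ℕ} (A : Matrix (Fin n) (Fin n) ℂ) : Set ℂ :=
  (fun w : Fin n → ℂ => star w ⬝ᵥ A *ᵥ w) '' {w | star w ⬝ᵥ w = 1}

lemma star_dotProduct_self_eq {n : ℕ} (w : Fin n → ℂ) :
    star w ⬝ᵥ w = ((∑ i, ‖w i‖ ^ 2 : ℝ) : ℂ) := by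
  simp only [dotProduct, Pi.star_apply, RCLike.star_def, Complex.conj_mul']
  push_cast
  rfl

lemma form_smul {n : ℕ} (A : Matrix (Fin n) (Fin n) ℂ) (c : ℂ) (w : Fin n → ℂ) :
    star (c • w) ⬝ᵥ A *ᵥ (c • w) = ((‖c‖ ^ 2 : ℝ) : ℂ) * (star w ⬝ᵥ A *ᵥ w) := by
  rw [star_smul, mulVec_smul, smul_dotProduct, dotProduct_smul, smul_eq_mul, smul_eq_mul,
    ← mul_assoc, RCLike.star_def, Complex.conj_mul']
  push_cast
  rfl

/-- Every nonzero vector is a real multiple `r • w` of a unit vector `w`, so the form takes the value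
`r² w* A w` on it. -/
lemma exists_unit {n : ℕ} (w : Fin n → ℂ) (hw : w ≠ 0) :
    ∃ (r : ℝ) (w' : Fin n → ℂ), r ≠ 0 ∧ star w' ⬝ᵥ w' = 1 ∧ w = (r : ℂ) • w' := by
  have hpos : 0 < ∑ i, ‖w i‖ ^ 2 := by
    obtain ⟨i, hi⟩ := Function.ne_iff.mp hw
    exact Finset.sum_pos' (fun _ _ => by positivity)
      ⟨i, Finset.mem_univ i, by have := norm_pos_iff.mpr hi; positivity⟩
  set N := ∑ i, ‖w i‖ ^ 2 with hN
  have hs : Real.sqrt N ≠ 0 := (Real.sqrt_pos.mpr hpos).ne'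
  have hsC : (Real.sqrt N : ℂ) ≠ 0 := by exact_mod_cast hs
  refine ⟨Real.sqrt N, ((Real.sqrt N : ℂ)⁻¹) • w, hs, ?_, ?_⟩
  · have h := form_smul (1 : Matrix (Fin n) (Fin n) ℂ) ((Real.sqrt N : ℂ)⁻¹) w
    rw [one_mulVec, one_mulVec, star_dotProduct_self_eq w, ← hN] at h
    rw [h, ← Complex.ofReal_mul, norm_inv, Complex.norm_real, Real.norm_eq_abs, inv_pow, sq_abs,
      Real.sq_sqrt hpos.le, inv_mul_cancel₀ hpos.ne', Complex.ofReal_one]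
  · rw [smul_smul, mul_inv_cancel₀ hsC, one_smul]

/-- There is a unit scalar `c` for which the cross terms `c α + c̄ β` are real: one that makes
`c (α - β̄)` real. -/
lemma exists_phase (α β : ℂ) :
    ∃ c : ℂ, ‖c‖ = 1 ∧ (c * α + (starRingEnd ℂ) c * β).im = 0 := by
  obtain ⟨c, hc, h⟩ := RCLike.exists_norm_eq_mul_self (α - (starRingEnd ℂ) β)
  refine ⟨c, hc, ?_⟩
  have := congrArg Complex.im h
  simp at this ⊢
  linarith

/-- The Toeplitz–Hausdorff theorem after an affine normalization: the form takes every value in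
`[0, 1]` on the unit sphere if it takes the values `0` and `1` there. -/
lemma exists_form_eq_of_zero_one {n : ℕ} (B : Matrix (Fin n) (Fin n) ℂ) (u v : Fin n → ℂ)
    (hBu : star u ⬝ᵥ B *ᵥ u = 0) (hu1 : star u ⬝ᵥ u = 1)
    (hv1 : star v ⬝ᵥ v = 1) (hBv : star v ⬝ᵥ B *ᵥ v = 1) (t : ℝ) (ht : t ∈ Set.Icc (0 : ℝ) 1) :
    ∃ w : Fin n → ℂ, star w ⬝ᵥ w = 1 ∧ star w ⬝ᵥ B *ᵥ w = t := by
  have hu : u ≠ 0 := by rintro rfl; simp at hu1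
  obtain ⟨c, hc, him⟩ := exists_phase (star u ⬝ᵥ B *ᵥ v) (star v ⬝ᵥ B *ᵥ u)
  let w : ℝ → Fin n → ℂ := fun s => ((1 - s : ℝ) : ℂ) • u + ((s : ℝ) : ℂ) • (c • v)
  have hcc : (starRingEnd ℂ) c * c = 1 := by rw [Complex.conj_mul', hc]; simp
  have hform : ∀ s, star (w s) ⬝ᵥ B *ᵥ (w s) = ((s ^ 2 : ℝ) : ℂ) + ((s * (1 - s) : ℝ) : ℂ) *
      (c * (star u ⬝ᵥ B *ᵥ v) + (starRingEnd ℂ) c * (star v ⬝ᵥ B *ᵥ u)) := by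
    intro s
    simp only [w, star_add, star_smul, mulVec_add, mulVec_smul, add_dotProduct, dotProduct_add,
      smul_dotProduct, dotProduct_smul, smul_eq_mul, hBu, hBv, RCLike.star_def, Complex.conj_ofReal]
    push_cast
    linear_combination (s : ℂ) ^ 2 * hcc
  have hw : ∀ s, w s ≠ 0 := by
    intro s hs
    -- `s • c • v = -(1 - s) • u`, and the form vanishes on multiples of `u` only when `s = 0`.
    have h1 : (s : ℂ) • (c • v) = (-((1 - s : ℝ) : ℂ)) • u := by
      rw [neg_smul]; exact eq_neg_of_add_eq_zero_right hs
    have h2 := congrArg (fun z : Fin n → ℂ => star z ⬝ᵥ B *ᵥ z) h1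
    simp only [smul_smul, form_smul, hBu, hBv, norm_mul, hc, mul_zero, mul_one] at h2
    have h3 : s = 0 := by simpa using h2
    apply hu
    simpa [w, h3] using hs
  have hcont : Continuous fun s : ℝ =>
      (star (w s) ⬝ᵥ B *ᵥ (w s)).re - t * (star (w s) ⬝ᵥ w s).re := by
    have : Continuous w := by fun_prop
    fun_prop
  have h0 : (star (w 0) ⬝ᵥ B *ᵥ (w 0)).re - t * (star (w 0) ⬝ᵥ w 0).re ≤ 0 := by
    have : w 0 = u := by simp [w]
    rw [this, hBu, hu1]; simpa using ht.1
  have h1 : 0 ≤ (star (w 1) ⬝ᵥ B *ᵥ (w 1)).re - t * (star (w 1) ⬝ᵥ w 1).re := by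
    have : w 1 = c • v := by simp [w]
    have hn := form_smul (1 : Matrix (Fin n) (Fin n) ℂ) c v
    rw [one_mulVec, one_mulVec] at hn
    rw [this, form_smul, hn, hBv, hv1, hc]; simpa using ht.2
  obtain ⟨s, -, hs⟩ := intermediate_value_Icc zero_le_one hcont.continuousOn ⟨h0, h1⟩
  have hs' : star (w s) ⬝ᵥ B *ᵥ (w s) = t * (star (w s) ⬝ᵥ w s) := by
    have hi : (star (w s) ⬝ᵥ B *ᵥ (w s)).im = 0 := by
      rw [hform, Complex.add_im, Complex.ofReal_im, Complex.im_ofReal_mul, him]; simp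
    have hs2 : (star (w s) ⬝ᵥ B *ᵥ (w s)).re - t * (star (w s) ⬝ᵥ w s).re = 0 := hs
    rw [star_dotProduct_self_eq] at hs2 ⊢
    apply Complex.ext
    · simp only [← Complex.ofReal_mul, Complex.ofReal_re] at hs2 ⊢; linarith
    · rw [hi, ← Complex.ofReal_mul, Complex.ofReal_im]
  obtain ⟨r, w', hr, hw', hrw⟩ := exists_unit (w s) (hw s)
  refine ⟨w', hw', ?_⟩
  have hn := form_smul (1 : Matrix (Fin n) (Fin n) ℂ) r w'
  rw [one_mulVec, one_mulVec] at hn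
  rw [hrw, form_smul, hn, hw'] at hs'
  have hr2 : ((‖(r : ℂ)‖ ^ 2 : ℝ) : ℂ) ≠ 0 := by
    simpa using hr
  apply mul_left_cancel₀ hr2
  rw [hs']; ring

/-- The Toeplitz–Hausdorff theorem. -/
lemma convex_numRange {n : ℕ} (A : Matrix (Fin n) (Fin n) ℂ) : Convex ℝ (numRange A) := by
  rintro _ ⟨u, hu, rfl⟩ _ ⟨v, hv, rfl⟩ a b ha hb hab
  simp only [Set.mem_ofPred_eq] at hu hv
  dsimp only
  set p := star u ⬝ᵥ A *ᵥ u with hp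
  set q := star v ⬝ᵥ A *ᵥ v with hq
  have habC : (a : ℂ) + b = 1 := by exact_mod_cast hab
  by_cases hpq : q - p = 0
  · refine ⟨u, hu, ?_⟩
    simp only [← hp, Complex.real_smul]
    linear_combination (-p) * habC - b * hpq
  have hform : ∀ w : Fin n → ℂ, star w ⬝ᵥ ((q - p)⁻¹ • (A - p • (1 : Matrix _ _ ℂ))) *ᵥ w
      = (q - p)⁻¹ * (star w ⬝ᵥ A *ᵥ w - p * (star w ⬝ᵥ w)) := by
    intro w
    simp [smul_mulVec, sub_mulVec, dotProduct_sub, dotProduct_smul]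
  obtain ⟨w, hw, hwb⟩ := exists_form_eq_of_zero_one ((q - p)⁻¹ • (A - p • (1 : Matrix _ _ ℂ))) u v
    (by rw [hform, hu, ← hp]; simp) hu hv
    (by rw [hform, hv, ← hq, mul_one, inv_mul_cancel₀ hpq]) b ⟨hb, by linarith⟩
  refine ⟨w, hw, ?_⟩
  rw [hform, hw, mul_one, inv_mul_eq_iff_eq_mul₀ hpq] at hwb
  simp only [Complex.real_smul]
  linear_combination hwb - p * habC

lemma isCompact_numRange {n : ℕ} (A : Matrix (Fin n) (Fin n) ℂ) : IsCompact (numRange A) := by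
  refine IsCompact.image ?_ (by fun_prop)
  refine Metric.isCompact_of_isClosed_isBounded ?_ ?_
  · exact isClosed_eq (by fun_prop) continuous_const
  · refine (Metric.isBounded_closedBall (x := (0 : Fin n → ℂ)) (r := 1)).subset fun w hw => ?_
    rw [mem_closedBall_zero_iff, pi_norm_le_iff_of_nonneg zero_le_one]
    intro i
    have h : star w ⬝ᵥ w = 1 := hw
    rw [star_dotProduct_self_eq] at h
    have h1 : ∑ i, ‖w i‖ ^ 2 = 1 := by exact_mod_cast h
    have h2 : ‖w i‖ ^ 2 ≤ ∑ i, ‖w i‖ ^ 2 :=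
      Finset.single_le_sum (f := fun i => ‖w i‖ ^ 2) (fun _ _ => by positivity) (Finset.mem_univ i)
    exact (sq_le_one_iff₀ (norm_nonneg _)).mp (h2.trans h1.le)

lemma star_form {n : ℕ} (A : Matrix (Fin n) (Fin n) ℂ) (w : Fin n → ℂ) :
    star w ⬝ᵥ Aᴴ *ᵥ w = (starRingEnd ℂ) (star w ⬝ᵥ A *ᵥ w) := by
  rw [← RCLike.star_def, star_dotProduct, star_mulVec, conjTranspose_conjTranspose,
    ← dotProduct_mulVec]

/-- A point `x ∈ ℝ²` belongs to the numerical range of `A` iff for every `(y₀,y₁,y₂) ∈ ℝ³`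
such that `y₀·I + y₁·A₁ + y₂·A₂ ⪰ 0` one has `y₀ + y₁x₁ + y₂x₂ ≥ 0`: the numerical range
is the affine dual of the LMI set of the pencil `(I, A₁, A₂)`. -/
theorem numerical_range_eq_affine_dual {n : ℕ} (hn : 1 ≤ n)
    (A A₁ A₂ : Matrix (Fin n) (Fin n) ℂ)
    (hA₁ : A₁ = (2 : ℂ)⁻¹ • (A + Aᴴ))
    (hA₂ : A₂ = (2 * Complex.I)⁻¹ • (A - Aᴴ)) (x : ℝ × ℝ) :
    (∃ w : Fin n → ℂ, star w ⬝ᵥ w = 1 ∧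
        x = ((star w ⬝ᵥ A₁.mulVec w).re, (star w ⬝ᵥ A₂.mulVec w).re)) ↔
    (∀ y₀ y₁ y₂ : ℝ,
        ((y₀ : ℂ) • (1 : Matrix (Fin n) (Fin n) ℂ) + (y₁ : ℂ) • A₁
          + (y₂ : ℂ) • A₂).PosSemidef →
        0 ≤ y₀ + y₁ * x.1 + y₂ * x.2) := by
  have h1 : ∀ w : Fin n → ℂ, star w ⬝ᵥ A₁ *ᵥ w = ((star w ⬝ᵥ A *ᵥ w).re : ℂ) := by
    intro w
    rw [hA₁, smul_mulVec, add_mulVec, dotProduct_smul, dotProduct_add, star_form,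
      Complex.add_conj, smul_eq_mul]
    push_cast; ring
  have h2 : ∀ w : Fin n → ℂ, star w ⬝ᵥ A₂ *ᵥ w = ((star w ⬝ᵥ A *ᵥ w).im : ℂ) := by
    intro w
    rw [hA₂, smul_mulVec, sub_mulVec, dotProduct_smul, dotProduct_sub, star_form,
      Complex.sub_conj, smul_eq_mul]
    push_cast
    field_simp [Complex.I_ne_zero]
  have hH1 : A₁.IsHermitian := by
    rw [hA₁, Matrix.IsHermitian, conjTranspose_smul, conjTranspose_add,
      conjTranspose_conjTranspose, add_comm]
    simp
  have hH2 : A₂.IsHermitian := by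
    rw [hA₂, Matrix.IsHermitian, conjTranspose_smul, conjTranspose_sub,
      conjTranspose_conjTranspose, ← neg_sub A, smul_neg, ← neg_smul]
    congr 1
    simp
  have hform : ∀ (y₀ y₁ y₂ : ℝ) (w : Fin n → ℂ),
      star w ⬝ᵥ ((y₀ : ℂ) • (1 : Matrix (Fin n) (Fin n) ℂ) + (y₁ : ℂ) • A₁ + (y₂ : ℂ) • A₂) *ᵥ w
      = y₀ * (star w ⬝ᵥ w)
        + ((y₁ * (star w ⬝ᵥ A *ᵥ w).re + y₂ * (star w ⬝ᵥ A *ᵥ w).im : ℝ) : ℂ) := by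
    intro y₀ y₁ y₂ w
    simp only [add_mulVec, smul_mulVec, dotProduct_add, dotProduct_smul, h1, h2, one_mulVec,
      smul_eq_mul]
    push_cast; ring
  constructor
  · rintro ⟨w, hw, rfl⟩ y₀ y₁ y₂ hM
    have := hM.dotProduct_mulVec_nonneg w
    rw [hform, hw, mul_one, ← Complex.ofReal_add, Complex.zero_le_real] at this
    simp only [h1, h2, Complex.ofReal_re]
    linarith
  · intro h
    by_cases hx : (⟨x.1, x.2⟩ : ℂ) ∈ numRange A
    · obtain ⟨w, hw, hwx⟩ := hx
      refine ⟨w, hw, ?_⟩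
      simp only at hwx
      simp only [h1, h2, Complex.ofReal_re, hwx]
    exfalso
    obtain ⟨f, a, hfx, hf⟩ := geometric_hahn_banach_point_closed (convex_numRange A)
      (isCompact_numRange A).isClosed hx
    have hfz : ∀ z : ℂ, f z = f 1 * z.re + f Complex.I * z.im := by
      intro z
      have hz : z = z.re • (1 : ℂ) + z.im • Complex.I := by simp
      conv_lhs => rw [hz, map_add, map_smul, map_smul]
      simp only [smul_eq_mul]; ring
    have hM := h (-a) (f 1) (f Complex.I) ?_
    · rw [hfz] at hfx
      simp only at hfx
      linarith
    refine PosSemidef.of_dotProduct_mulVec_nonneg ?_ fun w => ?_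
    · simp only [Matrix.IsHermitian, conjTranspose_add, conjTranspose_smul, conjTranspose_one,
        hH1.eq, hH2.eq, RCLike.star_def, Complex.conj_ofReal]
    by_cases hw : w = 0
    · simp [hw]
    -- By homogeneity it suffices to evaluate the form on unit vectors.
    obtain ⟨r, w', -, hw', rfl⟩ := exists_unit w hw
    have hlt := hf _ ⟨w', hw', rfl⟩
    rw [hfz] at hlt
    rw [form_smul, hform, hw', mul_one, ← Complex.ofReal_add, ← Complex.ofReal_mul,
      Complex.zero_le_real]
    exact mul_nonneg (by positivity) (by linarith)
end

section
/- Let A₁ and A₂ be Hermitian n×n complex matrices. Then the set {(y₁, y₂) ∈ ℝ² : I + y₁·A₁ + y₂·A₂ is positive definite} is exactly the connected component containing the origin of the set {(y₁, y₂) ∈ ℝ² : det(I + y₁·A₁ + y₂·A₂) ≠ 0}. Consequently the LMI set {(y₁, y₂) : I + y₁A₁ + y₂A₂ positive semidefinite} is the closure of the connected component of the origin delimited by the algebraic curve {y : det(I + y₁A₁ + y₂A₂) = 0}. -/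
/-!
Write `M y = I + y₁A₁ + y₂A₂`, and let `P` and `S` be the sets of `y` for which `M y` is positive
definite, respectively positive semidefinite.

`P` is convex, contains the origin and avoids the zeros of the determinant, so it lies in the
component of the origin. Conversely `P` is open (`isOpen_posDef`, by compactness of the unit
sphere) and `S` is closed (`isClosed_posSemidef`), and a positive semidefinite matrix with nonzero
determinant is positive definite. Hence `P` is relatively closed as well as open in
`{y | det (M y) ≠ 0}`, and a connected set meeting `P` cannot leave it.

For the closure, `closure P ⊆ S` because `S` is closed. If `y ∈ S` then
`M (t • y) = (1 - t) • I + t • M y` is positive definite for `0 ≤ t < 1`, so `y` is the limit of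
the points `t • y` of `P` as `t → 1⁻`.
-/

open Matrix
open scoped ComplexOrder

namespace Pencil

/-- The linear matrix pencil `I + y₁A₁ + y₂A₂`. -/
abbrev pencil {n : ℕ} (A₁ A₂ : Matrix (Fin n) (Fin n) ℂ) (y : ℝ × ℝ) : Matrix (Fin n) (Fin n) ℂ :=
  (1 : Matrix (Fin n) (Fin n) ℂ) + (y.1 : ℂ) • A₁ + (y.2 : ℂ) • A₂

variable {n : ℕ} {A₁ A₂ : Matrix (Fin n) (Fin n) ℂ}

lemma isHermitian_pencil (hA₁ : A₁.IsHermitian) (hA₂ : A₂.IsHermitian) (y : ℝ × ℝ) :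
    (pencil A₁ A₂ y).IsHermitian := by
  unfold pencil Matrix.IsHermitian
  simp [conjTranspose_add, conjTranspose_smul, hA₁.eq, hA₂.eq]

/-- The value `w* H w` of a Hermitian form is real, so its sign is that of its real part. -/
lemma dotProduct_eq_re {H : Matrix (Fin n) (Fin n) ℂ} (hH : H.IsHermitian) (w : Fin n → ℂ) :
    star w ⬝ᵥ (H *ᵥ w) = (((star w ⬝ᵥ (H *ᵥ w)).re : ℝ) : ℂ) := by
  have h := hH.im_star_dotProduct_mulVec_self w
  apply Complex.ext
  · simp
  · simpa using h

lemma posSemidef_iff_re {H : Matrix (Fin n) (Fin n) ℂ} (hH : H.IsHermitian) :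
    H.PosSemidef ↔ ∀ w : Fin n → ℂ, 0 ≤ (star w ⬝ᵥ (H *ᵥ w)).re := by
  rw [posSemidef_iff_dotProduct_mulVec, and_iff_right hH]
  refine forall_congr' fun w => ?_
  rw [dotProduct_eq_re hH w, Complex.zero_le_real, Complex.ofReal_re]

/-- Positive definiteness need only be tested on the unit sphere, which is compact. The norm is the
supremum norm of `Fin n → ℂ`; any norm would do. -/
lemma posDef_iff_re {H : Matrix (Fin n) (Fin n) ℂ} (hH : H.IsHermitian) :
    H.PosDef ↔ ∀ w ∈ Metric.sphere (0 : Fin n → ℂ) 1, 0 < (star w ⬝ᵥ (H *ᵥ w)).re := by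
  constructor
  · intro h w hw
    exact h.re_dotProduct_pos (ne_zero_of_mem_unit_sphere ⟨w, hw⟩)
  · intro h
    refine PosDef.of_dotProduct_mulVec_pos hH fun w hw => ?_
    have hn : 0 < ‖w‖ := norm_pos_iff.2 hw
    have := h (((‖w‖⁻¹ : ℝ) : ℂ) • w) (by
      simp [norm_smul, hn.ne'])
    rw [dotProduct_eq_re hH w, Complex.zero_lt_real]
    rw [mulVec_smul, star_smul, smul_dotProduct, dotProduct_smul, dotProduct_eq_re hH w] at this
    simp only [RCLike.star_def, Complex.conj_ofReal, smul_eq_mul, ← Complex.ofReal_mul,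
      Complex.ofReal_re] at this
    have hi : 0 < ‖w‖⁻¹ := inv_pos.2 hn
    exact pos_of_mul_pos_right (pos_of_mul_pos_right this hi.le) hi.le

lemma continuous_form :
    Continuous fun p : (ℝ × ℝ) × (Fin n → ℂ) =>
      (star p.2 ⬝ᵥ (pencil A₁ A₂ p.1 *ᵥ p.2)).re := by
  unfold pencil
  fun_prop

lemma isOpen_posDef (hA₁ : A₁.IsHermitian) (hA₂ : A₂.IsHermitian) :
    IsOpen {y | (pencil A₁ A₂ y).PosDef} := by
  simp only [posDef_iff_re (isHermitian_pencil hA₁ hA₂ _)]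
  rw [isOpen_iff_eventually]
  intro y hy
  refine (isCompact_sphere (0 : Fin n → ℂ) 1).eventually_forall_of_forall_eventually fun w hw => ?_
  exact (continuous_form (A₁ := A₁) (A₂ := A₂)).continuousAt.eventually (lt_mem_nhds (hy w hw))

lemma isClosed_posSemidef (hA₁ : A₁.IsHermitian) (hA₂ : A₂.IsHermitian) :
    IsClosed {y | (pencil A₁ A₂ y).PosSemidef} := by
  simp only [posSemidef_iff_re (isHermitian_pencil hA₁ hA₂ _), Set.ofPred_forall]
  exact isClosed_iInter fun w => isClosed_le continuous_const
    ((continuous_form (A₁ := A₁) (A₂ := A₂)).comp (Continuous.prodMk_left w))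

lemma pencil_combo (A₁ A₂ : Matrix (Fin n) (Fin n) ℂ) {a b : ℝ} (hab : a + b = 1) (x y : ℝ × ℝ) :
    pencil A₁ A₂ (a • x + b • y) = (a : ℂ) • pencil A₁ A₂ x + (b : ℂ) • pencil A₁ A₂ y := by
  have h : (a : ℂ) + b = 1 := by exact_mod_cast hab
  unfold pencil
  simp only [Prod.fst_add, Prod.snd_add, Prod.smul_fst, Prod.smul_snd, smul_eq_mul,
    Complex.ofReal_add, Complex.ofReal_mul]
  nth_rewrite 1 [← one_smul ℂ (1 : Matrix (Fin n) (Fin n) ℂ)]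
  rw [← h]
  module

/-- Strict convexity of the positive semidefinite cone, restricted to the pencil: a point of `P`
and a point of `S` span a segment that stays in `P` except possibly at the end lying in `S`. -/
lemma posDef_combo {a b : ℝ} (ha : 0 < a) (hb : 0 ≤ b) (hab : a + b = 1) {x y : ℝ × ℝ}
    (hx : (pencil A₁ A₂ x).PosDef) (hy : (pencil A₁ A₂ y).PosSemidef) :
    (pencil A₁ A₂ (a • x + b • y)).PosDef := by
  rw [pencil_combo A₁ A₂ hab]
  exact (hx.smul (Complex.zero_lt_real.2 ha)).add_posSemidef
    (hy.smul (Complex.zero_le_real.2 hb))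

lemma convex_posDef : Convex ℝ {y | (pencil A₁ A₂ y).PosDef} := by
  rw [convex_iff_forall_pos]
  intro x hx y hy a b ha hb hab
  exact posDef_combo ha hb.le hab hx (PosDef.posSemidef hy)

lemma posDef_zero : (pencil A₁ A₂ (0, 0)).PosDef := by
  simpa [pencil] using PosDef.one

theorem posDef_eq_component (hA₁ : A₁.IsHermitian) (hA₂ : A₂.IsHermitian) :
    {y | (pencil A₁ A₂ y).PosDef} =
      connectedComponentIn {y | (pencil A₁ A₂ y).det ≠ 0} (0, 0) := by
  have hsub : {y | (pencil A₁ A₂ y).PosDef} ⊆ {y | (pencil A₁ A₂ y).det ≠ 0} :=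
    fun y hy => (PosDef.det_pos hy).ne'
  have hmem : ((0, 0) : ℝ × ℝ) ∈ {y | (pencil A₁ A₂ y).PosDef} := posDef_zero
  refine (convex_posDef.isPreconnected.subset_connectedComponentIn hmem hsub).antisymm ?_
  refine isPreconnected_connectedComponentIn.subset_of_closure_inter_subset
    (isOpen_posDef hA₁ hA₂) ⟨(0, 0), mem_connectedComponentIn (hsub hmem), hmem⟩ ?_
  rintro y ⟨hy, hyC⟩
  have hS : (pencil A₁ A₂ y).PosSemidef :=
    closure_minimal (fun z hz => PosDef.posSemidef hz) (isClosed_posSemidef hA₁ hA₂) hy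
  have hdet : (pencil A₁ A₂ y).det ≠ 0 := connectedComponentIn_subset _ _ hyC
  exact hS.posDef_iff_det_ne_zero.2 hdet

theorem posSemidef_eq_closure (hA₁ : A₁.IsHermitian) (hA₂ : A₂.IsHermitian) :
    {y | (pencil A₁ A₂ y).PosSemidef} = closure {y | (pencil A₁ A₂ y).PosDef} := by
  refine Set.Subset.antisymm (fun y hy => ?_)
    (closure_minimal (fun z hz => PosDef.posSemidef hz) (isClosed_posSemidef hA₁ hA₂))
  have hlim : Filter.Tendsto (fun t : ℝ => (1 - t) • ((0, 0) : ℝ × ℝ) + t • y)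
      (nhdsWithin 1 (Set.Iio 1)) (nhds y) := by
    have hc : Continuous fun t : ℝ => (1 - t) • ((0, 0) : ℝ × ℝ) + t • y := by fun_prop
    have := (hc.tendsto 1).mono_left (nhdsWithin_le_nhds (s := Set.Iio 1))
    simpa using this
  refine mem_closure_of_tendsto hlim ?_
  filter_upwards [Ioo_mem_nhdsLT (zero_lt_one (α := ℝ))] with t ht
  exact posDef_combo (sub_pos.2 ht.2) ht.1.le (by ring) posDef_zero hy

end Pencil

/-- The positive-definiteness region of the pencil `I + y₁A₁ + y₂A₂` is the connected
component of the origin in `{y : det(I + y₁A₁ + y₂A₂) ≠ 0}`; consequently the LMI set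
`{y : I + y₁A₁ + y₂A₂ ⪰ 0}` is the closure of that connected component. -/
theorem posDef_region_eq_connectedComponent {n : ℕ}
    (A₁ A₂ : Matrix (Fin n) (Fin n) ℂ)
    (hA₁ : A₁.IsHermitian) (hA₂ : A₂.IsHermitian) :
    ({y : ℝ × ℝ | ((1 : Matrix (Fin n) (Fin n) ℂ) + (y.1 : ℂ) • A₁
          + (y.2 : ℂ) • A₂).PosDef} =
      connectedComponentIn
        {y : ℝ × ℝ | ((1 : Matrix (Fin n) (Fin n) ℂ) + (y.1 : ℂ) • A₁
          + (y.2 : ℂ) • A₂).det ≠ 0} (0, 0)) ∧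
    ({y : ℝ × ℝ | ((1 : Matrix (Fin n) (Fin n) ℂ) + (y.1 : ℂ) • A₁
          + (y.2 : ℂ) • A₂).PosSemidef} =
      closure (connectedComponentIn
        {y : ℝ × ℝ | ((1 : Matrix (Fin n) (Fin n) ℂ) + (y.1 : ℂ) • A₁
          + (y.2 : ℂ) • A₂).det ≠ 0} (0, 0))) := by
  rw [← Pencil.posDef_eq_component hA₁ hA₂]
  exact ⟨rfl, Pencil.posSemidef_eq_closure hA₁ hA₂⟩
end

section
/- Let A be an n×n complex matrix with n ≥ 1, set A₁ = (A + A*)/2, A₂ = (A − A*)/(2i), and let W(A) = {(w*A₁w, w*A₂w) ∈ ℝ² : w ∈ ℂⁿ, w*w = 1} be its numerical range. Suppose the line {x ∈ ℝ² : y₀ + y₁x₁ + y₂x₂ = 0}, with (y₁, y₂) ≠ (0,0), is a supporting line of W(A), i.e. y₀ + y₁x₁ + y₂x₂ ≥ 0 for all x ∈ W(A) and y₀ + y₁x₁ + y₂x₂ = 0 for some x ∈ W(A). Then det(y₀·I + y₁·A₁ + y₂·A₂) = 0. Hence every supporting line of the numerical range corresponds to a point of the determinantal curve p(y) = det(y₀A₀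 + y₁A₁ + y₂A₂) = 0. -/
/-!
Set `M = y₀ I + y₁ A₁ + y₂ A₂`. It is Hermitian, and for a unit vector `w` the quadratic form
`w* M w` is the value of the affine function `y₀ + y₁ x₁ + y₂ x₂` at the point of the numerical
range given by `w`. The supporting inequality therefore makes `M` positive semidefinite, by
homogeneity (`posSemidef_of_unit`). At a point of contact the form vanishes on a unit vector `w`,
and a positive semidefinite matrix kills every vector on which its form vanishes, so `M w = 0`
and `M` is singular.
-/

open Matrix
open scoped ComplexOrder

/-- Nonnegativity of a Hermitian form need only be tested on unit vectors: any nonzero vector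
can be rescaled to one. -/
theorem posSemidef_of_unit {n : ℕ} {M : Matrix (Fin n) (Fin n) ℂ} (hM : M.IsHermitian)
    (h : ∀ w : Fin n → ℂ, star w ⬝ᵥ w = 1 → 0 ≤ (star w ⬝ᵥ M.mulVec w).re) :
    M.PosSemidef := by
  refine Matrix.PosSemidef.of_dotProduct_mulVec_nonneg hM fun w => ?_
  have him : (star w ⬝ᵥ M.mulVec w).im = 0 := hM.im_star_dotProduct_mulVec_self w
  rcases eq_or_ne w 0 with rfl | hw
  · simp
  have hpos : 0 < star w ⬝ᵥ w := Matrix.dotProduct_star_self_pos_iff.mpr hw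
  obtain ⟨hre, him'⟩ := Complex.lt_def.mp hpos 
  set s : ℝ := (star w ⬝ᵥ w).re with hs
  have hs0 : 0 < s := hre
  have hself : star w ⬝ᵥ w = (s : ℂ) := by
    apply Complex.ext
    · simp [hs]
    · simpa using him'.symm
  have hrr : (√s)⁻¹ * (√s)⁻¹ = s⁻¹ := by rw [← mul_inv, Real.mul_self_sqrt hs0.le]
  have hrrC : (((√s)⁻¹ : ℝ) : ℂ) * (((√s)⁻¹ : ℝ) : ℂ) = ((s⁻¹ : ℝ) : ℂ) := by
    rw [← Complex.ofReal_mul, hrr]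
  have key := h ((((√s)⁻¹ : ℝ) : ℂ) • w) (by
    rw [star_smul, smul_dotProduct, dotProduct_smul, hself, smul_smul, Complex.star_def,
      Complex.conj_ofReal, hrrC, smul_eq_mul, ← Complex.ofReal_mul, inv_mul_cancel₀ hs0.ne',
      Complex.ofReal_one])
  rw [Matrix.mulVec_smul, star_smul, smul_dotProduct, dotProduct_smul, smul_smul,
    Complex.star_def, Complex.conj_ofReal, hrrC, smul_eq_mul, Complex.re_ofReal_mul] at key
  rw [Complex.le_def]
  exact ⟨nonneg_of_mul_nonneg_right key (inv_pos.mpr hs0), him.symm⟩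

/-- Every supporting line `{x : y₀ + y₁x₁ + y₂x₂ = 0}` of the numerical range of `A`
gives a point of the determinantal curve: `det(y₀·I + y₁·A₁ + y₂·A₂) = 0`. -/
theorem supporting_line_det_vanishes {n : ℕ} (hn : 1 ≤ n)
    (A A₁ A₂ : Matrix (Fin n) (Fin n) ℂ)
    (hA₁ : A₁ = (2 : ℂ)⁻¹ • (A + Aᴴ))
    (hA₂ : A₂ = (2 * Complex.I)⁻¹ • (A - Aᴴ))
    (y₀ y₁ y₂ : ℝ) (hy : (y₁, y₂) ≠ (0, 0))
    (hsupp : ∀ x : ℝ × ℝ,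
      (∃ w : Fin n → ℂ, star w ⬝ᵥ w = 1 ∧
          x = ((star w ⬝ᵥ A₁.mulVec w).re, (star w ⬝ᵥ A₂.mulVec w).re)) →
      0 ≤ y₀ + y₁ * x.1 + y₂ * x.2)
    (htouch : ∃ x : ℝ × ℝ,
      (∃ w : Fin n → ℂ, star w ⬝ᵥ w = 1 ∧
          x = ((star w ⬝ᵥ A₁.mulVec w).re, (star w ⬝ᵥ A₂.mulVec w).re)) ∧
      y₀ + y₁ * x.1 + y₂ * x.2 = 0) :
    ((y₀ : ℂ) • (1 : Matrix (Fin n) (Fin n) ℂ) + (y₁ : ℂ) • A₁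
      + (y₂ : ℂ) • A₂).det = 0 := by
  have h1 : A₁.IsHermitian := by
    subst hA₁
    simp [Matrix.IsHermitian, conjTranspose_smul, add_comm]
  have h2 : A₂.IsHermitian := by
    subst hA₂
    ext i j
    simp
    ring
  set M := (y₀ : ℂ) • (1 : Matrix (Fin n) (Fin n) ℂ) + (y₁ : ℂ) • A₁ + (y₂ : ℂ) • A₂ with hMdef
  have hM : M.IsHermitian := by
    rw [Matrix.IsHermitian, hMdef]
    simp [conjTranspose_smul, h1.eq, h2.eq]
  have hform : ∀ w : Fin n → ℂ, star w ⬝ᵥ w = 1 → (star w ⬝ᵥ M.mulVec w).re =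
      y₀ + y₁ * (star w ⬝ᵥ A₁.mulVec w).re + y₂ * (star w ⬝ᵥ A₂.mulVec w).re := by
    intro w hw
    simp [hMdef, Matrix.add_mulVec, Matrix.smul_mulVec, dotProduct_add, dotProduct_smul, hw]
  have hpsd : M.PosSemidef := posSemidef_of_unit hM fun w hw => by
    rw [hform w hw]
    exact hsupp _ ⟨w, hw, rfl⟩
  obtain ⟨_, ⟨w, hw, rfl⟩, h0⟩ := htouch
  refine Matrix.exists_mulVec_eq_zero_iff.mp ⟨w, ?_, ?_⟩
  · rintro rfl
    simp at hw
  · refine (hpsd.dotProduct_mulVec_zero_iff w).mp (Complex.ext ?_ ?_)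
    · rw [hform w hw]
      exact h0
    · exact hM.im_star_dotProduct_mulVec_self w
end

section
/- Let A₁ and A₂ be Hermitian n×n complex matrices. If A₁·A₂ = 0, then for all real numbers y₁ and y₂, det(I + y₁·A₁ + y₂·A₂) = det(I + y₁·A₁) · det(I + y₂·A₂). -/
open Matrix

/-- Easy direction of Craig's theorem: if `A₁A₂ = 0` then the determinant of the
pencil factors: `det(I + y₁A₁ + y₂A₂) = det(I + y₁A₁)·det(I + y₂A₂)`. -/
theorem craig_easy_direction {n : ℕ} (A₁ A₂ : Matrix (Fin n) (Fin n) ℂ)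
    (hA₁ : A₁.IsHermitian) (hA₂ : A₂.IsHermitian)
    (h : A₁ * A₂ = 0) (y₁ y₂ : ℝ) :
    ((1 : Matrix (Fin n) (Fin n) ℂ) + (y₁ : ℂ) • A₁ + (y₂ : ℂ) • A₂).det =
      ((1 : Matrix (Fin n) (Fin n) ℂ) + (y₁ : ℂ) • A₁).det *
      ((1 : Matrix (Fin n) (Fin n) ℂ) + (y₂ : ℂ) • A₂).det := by
  rw [← det_mul]
  congr 1
  -- The cross term of the product is `y₁y₂A₁A₂`, which vanishes.
  simp [add_mul, mul_add, h, add_comm]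
end

section
/- Let A₁ and A₂ be Hermitian n×n complex matrices. If det(I + y₁·A₁ + y₂·A₂) = det(I + y₁·A₁) · det(I + y₂·A₂) holds for all real numbers y₁ and y₂, then rank(A₁) + rank(A₂) ≤ n. -/
open Matrix

/-!
Restricting the hypothesis to the diagonal `y₁ = y₂ = t` already suffices. Both sides are then
polynomials in `t` agreeing at every real `t`, so they agree in `ℂ[X]`. The left side is
`det (X • (A₁ + A₂) + 1)`, of degree at most `n`. For a Hermitian `A` with eigenvalues `aₖ`,
`det (X • A + 1) = ∏ₖ (aₖ X + 1)` has degree equal to the number of nonzero `aₖ`, that is, the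
rank of `A` (`natDegree_detPencil`); hence the right side has degree `rank A₁ + rank A₂`.
-/

open Polynomial in
/-- The polynomial `det (I + X A)` in `ℂ[X]`, whose value at `t` is `det (I + t A)`. -/
noncomputable def detPencil {n : ℕ} (A : Matrix (Fin n) (Fin n) ℂ) : Polynomial ℂ :=
  det ((X : ℂ[X]) • A.map C + (1 : Matrix (Fin n) (Fin n) ℂ).map C)

lemma eval_detPencil {n : ℕ} (A : Matrix (Fin n) (Fin n) ℂ) (t : ℂ) :
    (detPencil A).eval t = ((1 : Matrix (Fin n) (Fin n) ℂ) + t • A).det := by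
  rw [detPencil, ← Polynomial.coe_evalRingHom, RingHom.map_det]
  congr 1
  ext i j
  rcases eq_or_ne i j with rfl | hij
  · simp
    ring
  · simp [hij]
    ring

lemma polynomial_eq_of_eval_real {p q : Polynomial ℂ}
    (h : ∀ t : ℝ, p.eval (t : ℂ) = q.eval (t : ℂ)) : p = q := by
  apply Polynomial.eq_of_infinite_eval_eq
  refine (Set.infinite_range_of_injective Complex.ofReal_injective).mono ?_
  rintro _ ⟨t, rfl⟩
  exact h t

open Polynomial in
lemma detPencil_eq_prod {n : ℕ} {A : Matrix (Fin n) (Fin n) ℂ} (hA : A.IsHermitian) :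
    detPencil A = ∏ i, (C (hA.eigenvalues i : ℂ) * X + C 1) := by
  apply Polynomial.funext
  intro t
  rw [eval_detPencil]
  set U := hA.eigenvectorUnitary
  -- Conjugation by the eigenvector unitary fixes `1` and diagonalizes `A`.
  have key : (1 : Matrix (Fin n) (Fin n) ℂ) + t • A =
      Unitary.conjStarAlgAut ℂ _ U
        (diagonal fun i => 1 + t * (hA.eigenvalues i : ℂ)) := by
    have hd : (diagonal fun i => 1 + t * (hA.eigenvalues i : ℂ)) =
        1 + t • diagonal (RCLike.ofReal ∘ hA.eigenvalues : Fin n → ℂ) := by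
      rw [← diagonal_one, ← diagonal_smul, diagonal_add]
      rfl
    rw [hd, map_add, map_one, map_smul, ← hA.spectral_theorem]
  rw [key, Unitary.conjStarAlgAut_apply, det_mul_right_comm, Unitary.mul_star_self_of_mem U.2, one_mul,
    det_diagonal, eval_prod]
  refine Finset.prod_congr rfl fun i _ => ?_
  simp
  ring

open Polynomial in
/-- Each nonzero eigenvalue contributes a factor of degree one and each zero eigenvalue the
constant `1`. -/
lemma natDegree_detPencil {n : ℕ} {A : Matrix (Fin n) (Fin n) ℂ} (hA : A.IsHermitian) :
    detPencil A ≠ 0 ∧ (detPencil A).natDegree = A.rank := by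
  have hne : ∀ i, C (hA.eigenvalues i : ℂ) * X + C 1 ≠ 0 := fun i h => by
    simpa using congrArg (eval 0) h
  rw [detPencil_eq_prod hA]
  refine ⟨Finset.prod_ne_zero_iff.2 fun i _ => hne i, ?_⟩
  rw [natDegree_prod _ _ fun i _ => hne i, hA.rank_eq_card_non_zero_eigs, Fintype.card_subtype,
    Finset.card_filter]
  refine Finset.sum_congr rfl fun i _ => ?_
  split_ifs with hi
  · exact natDegree_linear (by simpa using hi)
  · simp [not_not.1 hi]

/-- If `det(I + y₁A₁ + y₂A₂) = det(I + y₁A₁)·det(I + y₂A₂)` for all real `y₁, y₂`,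
then `rank A₁ + rank A₂ ≤ n`. -/
theorem craig_rank_bound {n : ℕ} (A₁ A₂ : Matrix (Fin n) (Fin n) ℂ)
    (hA₁ : A₁.IsHermitian) (hA₂ : A₂.IsHermitian)
    (h : ∀ y₁ y₂ : ℝ,
      ((1 : Matrix (Fin n) (Fin n) ℂ) + (y₁ : ℂ) • A₁ + (y₂ : ℂ) • A₂).det =
        ((1 : Matrix (Fin n) (Fin n) ℂ) + (y₁ : ℂ) • A₁).det *
        ((1 : Matrix (Fin n) (Fin n) ℂ) + (y₂ : ℂ) • A₂).det) :
    A₁.rank + A₂.rank ≤ n := by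
  have hpoly : detPencil (A₁ + A₂) = detPencil A₁ * detPencil A₂ := by
    refine polynomial_eq_of_eval_real fun t => ?_
    rw [Polynomial.eval_mul, eval_detPencil, eval_detPencil, eval_detPencil, ← h t t, smul_add,
      add_assoc]
  obtain ⟨h₁, hr₁⟩ := natDegree_detPencil hA₁
  obtain ⟨h₂, hr₂⟩ := natDegree_detPencil hA₂
  calc A₁.rank + A₂.rank = (detPencil (A₁ + A₂)).natDegree := by
        rw [hpoly, Polynomial.natDegree_mul h₁ h₂, hr₁, hr₂]
    _ ≤ n := by
        simpa [detPencil] using Polynomial.natDegree_det_X_add_C_le (A₁ + A₂) 1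
end

section
/- Let A₁ and A₂ be Hermitian n×n complex matrices such that det(I + y₁·A₁ + y₂·A₂) = det(I + y₁·A₁) · det(I + y₂·A₂) for all real y₁, y₂. Then there exist real numbers a₁, …, aₙ and b₁, …, bₙ with aₖ·bₖ = 0 for every k, such that det(I + y₁·A₁ + y₂·A₂) = ∏ₖ₌₁ⁿ (1 + y₁·aₖ + y₂·bₖ) for all real y₁, y₂. -/
/-! The hypothesis is used only on the diagonal `y₁ = y₂ = y`. There it reads
`det (1 + y (A₁ + A₂)) = det (1 + y A₁) * det (1 + y A₂)`, where all three matrices are Hermitian.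
For a Hermitian matrix `A` with eigenvalues `αᵢ`, `det (1 + y A) = ∏ᵢ (1 + y αᵢ)` is a polynomial
in `y` whose degree is the number of nonzero `αᵢ` (`det_one_add_smul_eq_prod`,
`natDegree_linearProd`). The left-hand side has degree at most `n`, so the numbers of nonzero
eigenvalues of `A₁` and of `A₂` add up to at most `n`. Hence the eigenvalues of `A₂` can be permuted
so that the nonzero ones sit at indices where the eigenvalues of `A₁` vanish
(`exists_perm_mul_eq_zero`), and then `(1 + y₁ aₖ) (1 + y₂ bₖ) = 1 + y₁ aₖ + y₂ bₖ` for each `k`. -/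

open Matrix

open Polynomial in
/-- The polynomial `∏ᵢ (1 + αᵢ X)`; for `α` the eigenvalues of a Hermitian matrix `A` it is
`det (1 + X A)`. -/
noncomputable def linearProd {n : ℕ} (α : Fin n → ℝ) : ℝ[X] := ∏ i, (C (α i) * X + C 1)

theorem eval_linearProd {n : ℕ} (α : Fin n → ℝ) (y : ℝ) :
    (linearProd α).eval y = ∏ i, (1 + y * α i) := by
  simp only [linearProd, Polynomial.eval_prod]
  refine Finset.prod_congr rfl fun i _ => ?_
  simp
  ring

theorem linear_factor_ne_zero (c : ℝ) :
    (Polynomial.C c * Polynomial.X + Polynomial.C 1 : Polynomial ℝ) ≠ 0 := by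
  intro h
  simpa using congrArg (Polynomial.eval 0) h

theorem natDegree_linearProd {n : ℕ} (α : Fin n → ℝ) :
    (linearProd α).natDegree = (Finset.univ.filter fun i => α i ≠ 0).card := by
  rw [linearProd, Polynomial.natDegree_prod _ _ fun i _ => linear_factor_ne_zero _,
    Finset.card_filter]
  refine Finset.sum_congr rfl fun i _ => ?_
  by_cases hi : α i = 0
  · simp [hi]
  · rw [Polynomial.natDegree_linear hi, if_pos hi]

theorem linearProd_ne_zero {n : ℕ} (α : Fin n → ℝ) : linearProd α ≠ 0 :=
  Finset.prod_ne_zero_iff.2 fun _ _ => linear_factor_ne_zero _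

theorem det_one_add_smul_eq_prod {n : ℕ} {A : Matrix (Fin n) (Fin n) ℂ} (hA : A.IsHermitian)
    (y : ℂ) : (1 + y • A).det = ∏ i, (1 + y * (hA.eigenvalues i : ℂ)) := by
  have key : 1 + y • A = Unitary.conjStarAlgAut ℂ _ hA.eigenvectorUnitary
      (diagonal fun i => 1 + y * (hA.eigenvalues i : ℂ)) := by
    have hd : (diagonal fun i => 1 + y * (hA.eigenvalues i : ℂ)) =
        1 + y • diagonal (RCLike.ofReal ∘ hA.eigenvalues) := by
      rw [← diagonal_one, ← diagonal_smul, diagonal_add]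
      rfl
    rw [hd, map_add, map_one, map_smul, ← hA.spectral_theorem]
  rw [key, Unitary.conjStarAlgAut_apply, det_mul_right_comm, ← Unitary.coe_star,
    Unitary.coe_mul_star_self, one_mul, det_diagonal]

/-- If the supports of `α` and `β` have total size at most `n`, some permutation moves the support
of `β` off the support of `α`. -/
theorem exists_perm_mul_eq_zero {n : ℕ} (α β : Fin n → ℝ)
    (h : (Finset.univ.filter fun i => α i ≠ 0).card +
      (Finset.univ.filter fun i => β i ≠ 0).card ≤ n) :
    ∃ σ : Equiv.Perm (Fin n), ∀ k, α k * β (σ k) = 0 := by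
  set S := Finset.univ.filter fun i => α i ≠ 0 with hS
  set T := Finset.univ.filter fun i => β i ≠ 0 with hT
  have hc : T.card ≤ Sᶜ.card := by
    rw [Finset.card_compl, Fintype.card_fin]
    omega
  obtain ⟨U, hU, hUT⟩ := Finset.exists_subset_card_eq hc
  obtain ⟨σ, hσ⟩ := Equiv.Perm.exists_map_finset_eq T U hUT.symm
  refine ⟨σ.symm, fun k => ?_⟩
  by_contra hk
  obtain ⟨h1, h2⟩ := mul_ne_zero_iff.1 hk
  have hkU : k ∈ U := by
    rw [← hσ, Finset.mem_map_equiv, hT]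
    simpa using h2
  have hkS := hU hkU
  simp [hS, h1] at hkS

/-- The degree count: comparing degrees in `y` on the diagonal `y₁ = y₂ = y`. -/
theorem card_support_add_card_support_le {n : ℕ} {A₁ A₂ : Matrix (Fin n) (Fin n) ℂ}
    (hA₁ : A₁.IsHermitian) (hA₂ : A₂.IsHermitian)
    (h : ∀ y : ℝ, (1 + (y : ℂ) • A₁ + (y : ℂ) • A₂).det =
      (1 + (y : ℂ) • A₁).det * (1 + (y : ℂ) • A₂).det) :
    (Finset.univ.filter fun i => hA₁.eigenvalues i ≠ 0).card +
      (Finset.univ.filter fun i => hA₂.eigenvalues i ≠ 0).card ≤ n := by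
  have hp : linearProd (hA₁.add hA₂).eigenvalues =
      linearProd hA₁.eigenvalues * linearProd hA₂.eigenvalues := by
    refine Polynomial.funext fun y => ?_
    have hy := h y
    rw [add_assoc, ← smul_add, det_one_add_smul_eq_prod (hA₁.add hA₂),
      det_one_add_smul_eq_prod hA₁, det_one_add_smul_eq_prod hA₂] at hy
    rw [Polynomial.eval_mul, eval_linearProd, eval_linearProd, eval_linearProd]
    exact_mod_cast hy
  have hdeg := congrArg Polynomial.natDegree hp
  rw [Polynomial.natDegree_mul (linearProd_ne_zero _) (linearProd_ne_zero _),
    natDegree_linearProd, natDegree_linearProd, natDegree_linearProd] at hdeg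
  rw [← hdeg]
  exact (Finset.card_le_univ _).trans_eq (Fintype.card_fin n)

/-- Factorization step in Craig's theorem: if the determinant of the pencil splits as
a product of the two one-parameter determinants, then it factors into linear terms
`∏ₖ (1 + y₁aₖ + y₂bₖ)` with `aₖbₖ = 0` for every `k`. -/
theorem craig_linear_factorization {n : ℕ} (A₁ A₂ : Matrix (Fin n) (Fin n) ℂ)
    (hA₁ : A₁.IsHermitian) (hA₂ : A₂.IsHermitian)
    (h : ∀ y₁ y₂ : ℝ,
      ((1 : Matrix (Fin n) (Fin n) ℂ) + (y₁ : ℂ) • A₁ + (y₂ : ℂ) • A₂).det =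
        ((1 : Matrix (Fin n) (Fin n) ℂ) + (y₁ : ℂ) • A₁).det *
        ((1 : Matrix (Fin n) (Fin n) ℂ) + (y₂ : ℂ) • A₂).det) :
    ∃ a b : Fin n → ℝ, (∀ k, a k * b k = 0) ∧
      ∀ y₁ y₂ : ℝ,
        ((1 : Matrix (Fin n) (Fin n) ℂ) + (y₁ : ℂ) • A₁ + (y₂ : ℂ) • A₂).det =
          ∏ k : Fin n, (1 + (y₁ : ℂ) * (a k : ℂ) + (y₂ : ℂ) * (b k : ℂ)) := by
  obtain ⟨σ, hσ⟩ := exists_perm_mul_eq_zero hA₁.eigenvalues hA₂.eigenvalues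
    (card_support_add_card_support_le hA₁ hA₂ fun y => h y y)
  refine ⟨hA₁.eigenvalues, fun k => hA₂.eigenvalues (σ k), hσ, fun y₁ y₂ => ?_⟩
  rw [h, det_one_add_smul_eq_prod hA₁, det_one_add_smul_eq_prod hA₂,
    ← Equiv.prod_comp σ fun i => 1 + (y₂ : ℂ) * (hA₂.eigenvalues i : ℂ),
    ← Finset.prod_mul_distrib]
  refine Finset.prod_congr rfl fun k _ => ?_
  have hk : (hA₁.eigenvalues k : ℂ) * (hA₂.eigenvalues (σ k) : ℂ) = 0 := by
    exact_mod_cast hσ k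
  linear_combination (y₁ : ℂ) * (y₂ : ℂ) * hk
end

section
/- Let A₁ and A₂ be Hermitian n×n complex matrices that commute (A₁·A₂ = A₂·A₁), and suppose det(I + y₁·A₁ + y₂·A₂) = det(I + y₁·A₁) · det(I + y₂·A₂) for all real y₁, y₂. Then A₁·A₂ = 0. -/
open Matrix

/-!
The matrices `A₁` and `A₂` are symmetric and commute, so their joint eigenspaces span the whole
space, and it suffices that `A₁ * A₂` kills every joint eigenvector `v`, i.e. that the two (real)
eigenvalues satisfy `a * b = 0`. If `a` and `b` were both nonzero, then `v` would lie in the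
kernel of `1 + y • A₁ + z • A₂` at every point of the real line `1 + a y + b z = 0`, so by the
determinant identity `det (1 + y • A₁) * det (1 + z • A₂)` would vanish along that line. Along
the line this is a product of two polynomials in `y`, neither of them zero, since the first equals
`1` where `y = 0` and the second equals `1` where `z = 0`. Such a product has only finitely many
roots, a contradiction (`eigenvalue_mul_eq_zero`).
-/

/-- The function `y ↦ det (1 + y • A)` is given by a polynomial. -/
lemma exists_polynomial_eval_eq_det {n : ℕ} (A : Matrix (Fin n) (Fin n) ℂ) :
    ∃ p : Polynomial ℂ, ∀ y : ℂ, p.eval y = (1 + y • A).det := by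
  refine ⟨(1 + (Polynomial.X : Polynomial ℂ) • A.map Polynomial.C).det, fun y => ?_⟩
  rw [← Polynomial.coe_evalRingHom, RingHom.map_det]
  congr 1
  ext i j
  by_cases hij : i = j <;> simp [hij] <;> ring

/-- The determinant identity forces one of the eigenvalues of a joint eigenvector to vanish. -/
lemma eigenvalue_mul_eq_zero {n : ℕ} (A₁ A₂ : Matrix (Fin n) (Fin n) ℂ)
    (h : ∀ y₁ y₂ : ℝ,
      ((1 : Matrix (Fin n) (Fin n) ℂ) + (y₁ : ℂ) • A₁ + (y₂ : ℂ) • A₂).det =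
        ((1 : Matrix (Fin n) (Fin n) ℂ) + (y₁ : ℂ) • A₁).det *
        ((1 : Matrix (Fin n) (Fin n) ℂ) + (y₂ : ℂ) • A₂).det)
    (a b : ℝ) (v : Fin n → ℂ) (hv : v ≠ 0)
    (h₁ : A₁ *ᵥ v = (a : ℂ) • v) (h₂ : A₂ *ᵥ v = (b : ℂ) • v) : a * b = 0 := by
  by_contra hab
  obtain ⟨ha, hb⟩ := mul_ne_zero_iff.mp hab
  have ha' : (a : ℂ) ≠ 0 := by exact_mod_cast ha
  have hb' : (b : ℂ) ≠ 0 := by exact_mod_cast hb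
  obtain ⟨p, hp⟩ := exists_polynomial_eval_eq_det A₁
  obtain ⟨q, hq⟩ := exists_polynomial_eval_eq_det A₂
  -- `ℓ` is the coordinate `z` on the line `1 + a y + b z = 0`, as a polynomial in `y`.
  set ℓ : Polynomial ℂ := Polynomial.C (-1 / (b : ℂ)) - Polynomial.C ((a : ℂ) / b) * Polynomial.X
    with hℓ
  have hp0 : p ≠ 0 := by
    rintro rfl
    simpa using hp 0
  have hq0 : q.comp ℓ ≠ 0 := by
    intro h0
    have hz : ℓ.eval (-1 / (a : ℂ)) = 0 := by
      simp only [hℓ, Polynomial.eval_sub, Polynomial.eval_mul, Polynomial.eval_C, Polynomial.eval_X]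
      field_simp
      ring
    have h1 := congrArg (Polynomial.eval (-1 / (a : ℂ))) h0
    rw [Polynomial.eval_comp, hz, hq] at h1
    simp at h1
  refine mul_ne_zero hp0 hq0 (Polynomial.eq_zero_of_infinite_isRoot _ ?_)
  refine (Set.infinite_range_of_injective Complex.ofReal_injective).mono ?_
  rintro _ ⟨y, rfl⟩
  have hz : ℓ.eval (y : ℂ) = ((-1 / b - a / b * y : ℝ) : ℂ) := by simp [hℓ]
  show Polynomial.eval (y : ℂ) (p * q.comp ℓ) = 0
  rw [Polynomial.eval_mul, Polynomial.eval_comp, hz, hp, hq, ← h]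
  refine Matrix.exists_mulVec_eq_zero_iff.mp ⟨v, hv, ?_⟩
  rw [Matrix.add_mulVec, Matrix.add_mulVec, Matrix.smul_mulVec, Matrix.smul_mulVec, h₁, h₂,
    Matrix.one_mulVec]
  ext i
  simp only [Pi.add_apply, Pi.smul_apply, smul_eq_mul, Pi.zero_apply]
  push_cast
  field_simp
  ring

/-- If two commuting Hermitian matrices satisfy the Craig determinant identity,
then their product is zero. -/
theorem craig_commuting_case {n : ℕ} (A₁ A₂ : Matrix (Fin n) (Fin n) ℂ)
    (hA₁ : A₁.IsHermitian) (hA₂ : A₂.IsHermitian)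
    (hcomm : A₁ * A₂ = A₂ * A₁)
    (h : ∀ y₁ y₂ : ℝ,
      ((1 : Matrix (Fin n) (Fin n) ℂ) + (y₁ : ℂ) • A₁ + (y₂ : ℂ) • A₂).det =
        ((1 : Matrix (Fin n) (Fin n) ℂ) + (y₁ : ℂ) • A₁).det *
        ((1 : Matrix (Fin n) (Fin n) ℂ) + (y₂ : ℂ) • A₂).det) :
    A₁ * A₂ = 0 := by
  have hS₁ : A₁.toEuclideanLin.IsSymmetric := Matrix.isSymmetric_toEuclideanLin_iff.mpr hA₁
  have hS₂ : A₂.toEuclideanLin.IsSymmetric := Matrix.isSymmetric_toEuclideanLin_iff.mpr hA₂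
  have hC : Commute A₁.toEuclideanLin A₂.toEuclideanLin := by
    ext v i
    simp [Matrix.toLpLin_apply, Matrix.mulVec_mulVec, hcomm]
  have hle : (⊤ : Submodule ℂ (EuclideanSpace ℂ (Fin n))) ≤
      LinearMap.ker (A₁ * A₂).toEuclideanLin := by
    rw [← hS₁.iSup_iSup_eigenspace_inf_eigenspace_eq_top_of_commute hS₂ hC]
    refine iSup_le fun α => iSup_le fun γ => ?_
    rintro v ⟨hv₁, hv₂⟩
    by_cases hv : v = 0
    · simp [hv]
    have hα := hS₁.conj_eigenvalue_eq_self
      (Module.End.hasEigenvalue_of_hasEigenvector ⟨hv₁, hv⟩)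
    have hγ := hS₂.conj_eigenvalue_eq_self
      (Module.End.hasEigenvalue_of_hasEigenvector ⟨hv₂, hv⟩)
    obtain ⟨a, rfl⟩ := Complex.conj_eq_iff_real.mp hα
    obtain ⟨b, rfl⟩ := Complex.conj_eq_iff_real.mp hγ
    have h₁ : A₁ *ᵥ v.ofLp = (a : ℂ) • v.ofLp :=
      congrArg WithLp.ofLp (Module.End.mem_eigenspace_iff.mp hv₁)
    have h₂ : A₂ *ᵥ v.ofLp = (b : ℂ) • v.ofLp :=
      congrArg WithLp.ofLp (Module.End.mem_eigenspace_iff.mp hv₂)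
    have hab := eigenvalue_mul_eq_zero A₁ A₂ h a b v.ofLp (by simpa using hv) h₁ h₂
    have hab' : (b : ℂ) * a = 0 := by rw [mul_comm]; exact_mod_cast hab
    rw [LinearMap.mem_ker, Matrix.toLpLin_apply, ← Matrix.mulVec_mulVec, h₂, Matrix.mulVec_smul,
      h₁, smul_smul, hab', zero_smul, WithLp.toLp_zero]
  exact Matrix.toEuclideanLin.map_eq_zero_iff.mp (LinearMap.ker_eq_top.mp (top_le_iff.mp hle))
end

section
/- (Craig's theorem, central case) Let A₁ and A₂ be Hermitian n×n complex matrices. Then det(I + y₁·A₁ + y₂·A₂) = det(I + y₁·A₁) · det(I + y₂·A₂) holds for all real numbers y₁ and y₂ if and only if A₁·A₂ = 0. -/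
/-!
The identity on the lines `y₂ = ±y₁` already forces `A₁ * A₂ = 0`. For `M = A₁ ± A₂`, substituting
`y₁ = -1/t` and `y₂ = ∓1/t` and clearing denominators gives
`X ^ n * charpoly M = charpoly A₁ * charpoly (±A₂)`, so that the eigenvalues of `M`, together with
`n` zeros, are those of `A₁` and `±A₂` with multiplicity. Comparing fourth power sums,
`tr (M ^ 4) = tr (A₁ ^ 4) + tr (A₂ ^ 4)` for both signs. Adding the two equations and expanding
(non-commutatively, using that the trace is cyclic) leaves
`‖A₁A₂ + A₂A₁‖² + 2 ‖A₁A₂‖² = 0` in the Frobenius norm `‖C‖² = tr (C Cᴴ)`; this is where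
Hermitian symmetry enters. Hence `A₁ * A₂ = 0`. Conversely, `A₁ * A₂ = 0` makes
`(1 + y₁A₁)(1 + y₂A₂) = 1 + y₁A₁ + y₂A₂`.
-/

open Matrix

/-- The trace of a power is the corresponding power sum of the eigenvalues. -/
lemma trace_pow_eq_sum_roots {n : ℕ} {M : Matrix (Fin n) (Fin n) ℂ} (hM : M.IsHermitian)
    (k : ℕ) : (M ^ k).trace = (M.charpoly.roots.map (· ^ k)).sum := by
  rw [hM.roots_charpoly_eq_eigenvalues]
  conv_lhs => rw [hM.spectral_theorem, ← map_pow, Matrix.diagonal_pow,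
    Unitary.conjStarAlgAut_apply, Matrix.trace_mul_comm, ← mul_assoc]
  simp [Matrix.trace_diagonal, List.sum_ofFn]

/-- The determinant identity along the diagonal `y₁ = y₂ = y`, as a factorization of
characteristic polynomials. -/
lemma X_pow_mul_charpoly_add {n : ℕ} {P Q : Matrix (Fin n) (Fin n) ℂ}
    (h : ∀ y : ℝ, (1 + (y : ℂ) • P + (y : ℂ) • Q).det =
      (1 + (y : ℂ) • P).det * (1 + (y : ℂ) • Q).det) :
    Polynomial.X ^ n * (P + Q).charpoly = P.charpoly * Q.charpoly := by
  apply Polynomial.eq_of_infinite_eval_eq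
  have hinf : (((↑) : ℝ → ℂ) '' Set.Ioi 0).Infinite :=
    (Set.Ioi_infinite 0).image Complex.ofReal_injective.injOn
  refine hinf.mono ?_
  rintro _ ⟨t, ht, rfl⟩
  have ht0 : (t : ℂ) ≠ 0 := by exact_mod_cast ne_of_gt (Set.mem_Ioi.mp ht)
  -- `det (t - M) = t ^ n * det (1 - M / t)`
  have key : ∀ M : Matrix (Fin n) (Fin n) ℂ, M.charpoly.eval (t : ℂ) =
      (t : ℂ) ^ n * (1 + ((-t⁻¹ : ℝ) : ℂ) • M).det := by
    intro M
    have h1 : Matrix.scalar (Fin n) (t : ℂ) - M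
        = (t : ℂ) • (1 + ((-t⁻¹ : ℝ) : ℂ) • M) := by
      rw [smul_add, smul_smul, Matrix.smul_one_eq_diagonal]
      simp [ht0, sub_eq_add_neg]
    rw [Matrix.eval_charpoly, h1, Matrix.det_smul, Fintype.card_fin]
  simp only [Set.mem_ofPred_eq, Polynomial.eval_mul, Polynomial.eval_pow, Polynomial.eval_X, key]
  rw [smul_add, ← add_assoc, h]
  ring

lemma trace_pow_four_add {n : ℕ} {P Q : Matrix (Fin n) (Fin n) ℂ}
    (hP : P.IsHermitian) (hQ : Q.IsHermitian)
    (h : ∀ y : ℝ, (1 + (y : ℂ) • P + (y : ℂ) • Q).det =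
      (1 + (y : ℂ) • P).det * (1 + (y : ℂ) • Q).det) :
    ((P + Q) ^ 4).trace = (P ^ 4).trace + (Q ^ 4).trace := by
  have hr := congrArg (fun p : Polynomial ℂ => (p.roots.map (· ^ 4)).sum)
    (X_pow_mul_charpoly_add h)
  have hX : (Polynomial.X ^ n : Polynomial ℂ) ≠ 0 := (Polynomial.monic_X_pow n).ne_zero
  rw [Polynomial.roots_mul (mul_ne_zero hX (Matrix.charpoly_monic _).ne_zero),
    Polynomial.roots_mul (mul_ne_zero (Matrix.charpoly_monic _).ne_zero
      (Matrix.charpoly_monic _).ne_zero)] at hr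
  rw [trace_pow_eq_sum_roots (hP.add hQ), trace_pow_eq_sum_roots hP, trace_pow_eq_sum_roots hQ]
  simpa [Multiset.map_nsmul, Multiset.sum_nsmul] using hr

open scoped ComplexOrder in
/-- The parallelogram-type identity for `tr (M ^ 4)` forces the product to vanish: expanding it
leaves a sum of squares of Frobenius norms. -/
lemma mul_eq_zero_of_trace_pow_four {n : ℕ} {A B : Matrix (Fin n) (Fin n) ℂ}
    (hA : A.IsHermitian) (hB : B.IsHermitian)
    (h : ((A + B) ^ 4).trace + ((A - B) ^ 4).trace = 2 * ((A ^ 4).trace + (B ^ 4).trace)) :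
    A * B = 0 := by
  have hexp : (A + B) ^ 4 + (A - B) ^ 4 = A ^ 4 + A ^ 4 + (B ^ 4 + B ^ 4)
      + ((A * B + B * A) * (A * B + B * A) + (A * B + B * A) * (A * B + B * A))
      + (A * (A * B * B) + A * (A * B * B)) + (B * B * A * A + B * B * A * A) := by
    noncomm_ring
  have hS : (A * B + B * A)ᴴ = A * B + B * A := by
    rw [conjTranspose_add, conjTranspose_mul, conjTranspose_mul, hA.eq, hB.eq, add_comm]
  have hAB : (A * B)ᴴ = B * A := by rw [conjTranspose_mul, hA.eq, hB.eq]
  have h1 := (posSemidef_self_mul_conjTranspose (A * B + B * A)).trace_nonneg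
  have h2 := (posSemidef_self_mul_conjTranspose (A * B)).trace_nonneg
  rw [hS] at h1
  have e1 : (A * (A * B * B)).trace = (A * B * (A * B)ᴴ).trace := by
    rw [hAB, trace_mul_comm]; simp only [mul_assoc]
  have e2 : (B * B * A * A).trace = (A * B * (A * B)ᴴ).trace := by
    rw [hAB, trace_mul_comm]; simp only [mul_assoc]
  have ht := congrArg Matrix.trace hexp
  simp only [trace_add, e1, e2, h] at ht
  have hsum : ((A * B + B * A) * (A * B + B * A)).trace + 2 * (A * B * (A * B)ᴴ).trace = 0 := by
    linear_combination (-1 / 2) * ht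
  have h3 : (A * B * (A * B)ᴴ).trace = 0 := by
    have h4 := (add_eq_zero_iff_of_nonneg h1 (mul_nonneg zero_le_two h2)).1 hsum
    simpa using h4.2
  exact trace_mul_conjTranspose_self_eq_zero_iff.1 h3

/-- Craig's theorem (central case): for Hermitian `A₁, A₂`, the determinant identity
`det(I + y₁A₁ + y₂A₂) = det(I + y₁A₁)·det(I + y₂A₂)` holds for all real `y₁, y₂`
if and only if `A₁A₂ = 0`. -/
theorem craig_theorem {n : ℕ} (A₁ A₂ : Matrix (Fin n) (Fin n) ℂ)
    (hA₁ : A₁.IsHermitian) (hA₂ : A₂.IsHermitian) :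
    (∀ y₁ y₂ : ℝ,
      ((1 : Matrix (Fin n) (Fin n) ℂ) + (y₁ : ℂ) • A₁ + (y₂ : ℂ) • A₂).det =
        ((1 : Matrix (Fin n) (Fin n) ℂ) + (y₁ : ℂ) • A₁).det *
        ((1 : Matrix (Fin n) (Fin n) ℂ) + (y₂ : ℂ) • A₂).det) ↔
    A₁ * A₂ = 0 := by
  constructor
  · intro h
    have hp := trace_pow_four_add hA₁ hA₂ (fun y => h y y)
    have hm := trace_pow_four_add hA₁ hA₂.neg (fun y => by simpa using h y (-y))
    rw [← sub_eq_add_neg, Even.neg_pow (by decide)] at hm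
    apply mul_eq_zero_of_trace_pow_four hA₁ hA₂
    rw [hp, hm]
    ring
  · intro h y₁ y₂
    rw [← det_mul, add_mul, mul_add, mul_add]
    congr 1
    simp only [one_mul, mul_one, smul_mul_smul_comm, h, smul_zero]
    abel
end
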